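/- arXiv:2407.03485 — 7 statements merged into one kernel-verified Lean document; each statement's English description precedes it below -/
import Mathlib

section
/- Let T be a maximal monotone operator on a real Hilbert space H, λ > 0, σ ∈ [0,1), ε ≥ 0, and let (y, v, ε) be a σ-approximate solution of the proximal system at (x, λ), i.e. v ∈ T^ε(y) and ‖λv + y − x‖² + 2λε ≤ σ²(‖λv‖² + ‖y − x‖²). Then the following three statements are equivalent: (i) v = 0; (ii) 0 ∈ T(x); (iii) y = x; and any of them implies ε = 0. -/
open scoped RealInnerProductSpace

variable {H : Type*} [NormedAddCommGroup H] [InnerProductSpace ℝ H]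

/-- A set-valued operator is monotone. -/
def IsMonotoneOp (T : H → Set H) : Prop :=
  ∀ x y u v, u ∈ T x → v ∈ T y → 0 ≤ ⟪u - v, x - y⟫

/-- A set-valued operator is maximal monotone. -/
def IsMaxMonotoneOp (T : H → Set H) : Prop :=
  IsMonotoneOp T ∧ ∀ x v, (∀ y u, u ∈ T y → 0 ≤ ⟪u - v, y - x⟫) → v ∈ T x

/-- The ε-enlargement of a set-valued operator. -/
def enl (T : H → Set H) (ε : ℝ) (y : H) : Set H :=
  {v | ∀ z u, u ∈ T z → ⟪u - v, z - y⟫ ≥ -ε}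

/-!
Maximality forces `0 ≤ ε`: otherwise `v ∈ T y`, and testing `v ∈ enl T ε y` against `v ∈ T y` itself
gives `0 ≥ -ε`. Expanding the square turns the error criterion into
`(1 - σ ^ 2) * (‖lam • v‖ ^ 2 + ‖y - x‖ ^ 2) ≤ -2 * lam * (⟪v, y - x⟫ + ε)`.
Each of `v = 0`, `y = x` and `0 ∈ T x` makes the right-hand side nonpositive, the last one by
testing `v ∈ enl T ε y` against `0 ∈ T x`; hence `v = 0` and `y = x`, and the criterion then leaves
`ε = 0`. So `0 ∈ enl T 0 x`, and maximality gives `0 ∈ T x`.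
-/

section Enlargement

variable {T : H → Set H} {ε : ℝ} {x y v : H}

theorem enl_subset_enl {ε' : ℝ} (h : ε ≤ ε') : enl T ε y ⊆ enl T ε' y :=
  fun _ hv z u hu => (neg_le_neg h).trans (hv z u hu)

theorem IsMaxMonotoneOp.enl_zero_subset (hT : IsMaxMonotoneOp T) (x : H) : enl T 0 x ⊆ T x :=
  fun v hv => hT.2 x v fun z u hu => neg_zero.symm.trans_le (hv z u hu)

theorem nonneg_of_mem_enl (hT : enl T 0 y ⊆ T y) (hv : v ∈ enl T ε y) : 0 ≤ ε := by
  by_contra! hε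
  have hvT : v ∈ T y := hT (enl_subset_enl hε.le hv)
  have hself : -ε ≤ ⟪v - v, y - y⟫ := hv y v hvT
  rw [sub_self, inner_zero_left] at hself
  linarith

theorem neg_le_inner_of_mem_enl (hv : v ∈ enl T ε y) (hx : (0 : H) ∈ T x) :
    -ε ≤ ⟪v, y - x⟫ := by
  simpa only [zero_sub, ← neg_sub y x, inner_neg_neg] using hv x 0 hx

end Enlargement

/-- The relative error criterion with tolerance `σ` for the proximal system `u ∈ T z`,
`lam • u + z - x = 0` in the unknowns `(z, u)`, at the candidate `(y, v)`. Together with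
`v ∈ enl T ε y` it says that `(y, v, ε)` is a `σ`-approximate solution at `(x, lam)`; it is kept
separate because it does not involve `T`. -/
def ProxErrorBound (lam σ ε : ℝ) (x y v : H) : Prop :=
  ‖lam • v + y - x‖ ^ 2 + 2 * lam * ε ≤ σ ^ 2 * (‖lam • v‖ ^ 2 + ‖y - x‖ ^ 2)

namespace ProxErrorBound

variable {lam σ ε : ℝ} {x y v : H}

theorem one_sub_sq_mul_le (h : ProxErrorBound lam σ ε x y v) :
    (1 - σ ^ 2) * (‖lam • v‖ ^ 2 + ‖y - x‖ ^ 2) ≤ -2 * lam * (⟪v, y - x⟫ + ε) := by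
  have hexpand : ‖lam • v + y - x‖ ^ 2 =
      ‖lam • v‖ ^ 2 + 2 * (lam * ⟪v, y - x⟫) + ‖y - x‖ ^ 2 := by
    rw [add_sub_assoc, norm_add_sq_real, real_inner_smul_left]
  unfold ProxErrorBound at h
  linarith

theorem eq_zero_and_eq_of_neg_le_inner (h : ProxErrorBound lam σ ε x y v) (hlam : 0 < lam)
    (hσ : |σ| < 1) (hinner : -ε ≤ ⟪v, y - x⟫) : v = 0 ∧ y = x := by
  have hσ' : 0 < 1 - σ ^ 2 := sub_pos.2 ((sq_lt_one_iff_abs_lt_one σ).2 hσ)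
  have hprod : (1 - σ ^ 2) * (‖lam • v‖ ^ 2 + ‖y - x‖ ^ 2) ≤ 0 :=
    h.one_sub_sq_mul_le.trans
      (mul_nonpos_of_nonpos_of_nonneg (by linarith) (by linarith))
  have hsum : ‖lam • v‖ ^ 2 + ‖y - x‖ ^ 2 = 0 :=
    (nonpos_of_mul_nonpos_right hprod hσ').antisymm (by positivity)
  obtain ⟨hv, hy⟩ := (add_eq_zero_iff_of_nonneg (sq_nonneg _) (sq_nonneg _)).1 hsum
  rw [sq_eq_zero_iff, norm_eq_zero] at hv hy
  exact ⟨(smul_eq_zero_iff_right hlam.ne').1 hv, sub_eq_zero.1 hy⟩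

theorem nonpos_of_self_zero (h : ProxErrorBound lam σ ε x x 0) (hlam : 0 < lam) : ε ≤ 0 := by
  have hprod : 2 * lam * ε ≤ 0 := by simpa [ProxErrorBound] using h
  exact nonpos_of_mul_nonpos_right hprod (by positivity)

end ProxErrorBound

theorem stmt1_general {T : H → Set H} (hT : ∀ z, enl T 0 z ⊆ T z) {lam σ ε : ℝ}
    (hlam : 0 < lam) (hσ : |σ| < 1) {x y v : H} (hincl : v ∈ enl T ε y)
    (herr : ProxErrorBound lam σ ε x y v) :
    ((v = 0 ↔ (0 : H) ∈ T x) ∧ ((0 : H) ∈ T x ↔ y = x)) ∧ (v = 0 → ε = 0) := by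
  have hε : 0 ≤ ε := nonneg_of_mem_enl (hT y) hincl
  have of_inner : -ε ≤ ⟪v, y - x⟫ → v = 0 ∧ y = x :=
    herr.eq_zero_and_eq_of_neg_le_inner hlam hσ
  have of_mem (hx : (0 : H) ∈ T x) : v = 0 ∧ y = x :=
    of_inner (neg_le_inner_of_mem_enl hincl hx)
  have of_eq_zero (hv : v = 0) : v = 0 ∧ y = x := of_inner (by simpa [hv] using hε)
  have of_eq (hy : y = x) : v = 0 ∧ y = x := of_inner (by simpa [hy] using hε)
  have exact_solution : v = 0 ∧ y = x → ε = 0 ∧ (0 : H) ∈ T x := by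
    rintro ⟨rfl, rfl⟩
    obtain rfl : ε = 0 := (herr.nonpos_of_self_zero hlam).antisymm hε
    exact ⟨rfl, hT y hincl⟩
  exact ⟨⟨⟨fun hv => (exact_solution (of_eq_zero hv)).2, fun hx => (of_mem hx).1⟩,
    ⟨fun hx => (of_mem hx).2, fun hy => (exact_solution (of_eq hy)).2⟩⟩,
    fun hv => (exact_solution (of_eq_zero hv)).1⟩

/-- Lemma 2.2 (second part): for a σ-approximate solution of the proximal system,
v = 0, 0 ∈ T(x) and y = x are equivalent, and any of them implies ε = 0. -/
theorem stmt1 (T : H → Set H) (hT : IsMaxMonotoneOp T)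
    (lam σ ε : ℝ) (hlam : 0 < lam) (hσ0 : 0 ≤ σ) (hσ1 : σ < 1) (hε : 0 ≤ ε)
    (x y v : H)
    (hincl : v ∈ enl T ε y)
    (herr : ‖lam • v + y - x‖ ^ 2 + 2 * lam * ε ≤
      σ ^ 2 * (‖lam • v‖ ^ 2 + ‖y - x‖ ^ 2)) :
    ((v = 0 ↔ (0 : H) ∈ T x) ∧ ((0 : H) ∈ T x ↔ y = x)) ∧ (v = 0 → ε = 0) :=
  stmt1_general hT.enl_zero_subset hlam (abs_lt.2 ⟨by linarith, hσ1⟩) hincl herr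
end

section
/- Let T be a maximal monotone operator on a real Hilbert space H, λ > 0, σ ∈ [0,1), ε ≥ 0, and let (y, v, ε) be a σ-approximate solution of the proximal system at (x, λ), i.e. v ∈ T^ε(y) and ‖λv + y − x‖² + 2λε ≤ σ²(‖λv‖² + ‖y − x‖²). Let H' := {z ∈ H : ⟨z − y, v⟩ ≤ ε} and let p ∈ H' satisfy ‖p − x‖ ≤ ‖z − x‖ for all z ∈ H' (i.e. p is the orthogonal projection of x onto H'). Then ‖p − x‖ ≥ ((1 − σ²)/2) · max{λ‖v‖, ‖x − y‖}. -/
open scoped RealInnerProductSpace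

variable {H : Type*} [NormedAddCommGroup H] [InnerProductSpace ℝ H]

/-! Expanding the square, the error criterion says that `x` violates the inequality `⟪z - y, v⟫ ≤ ε`
with a margin: `λ (⟪x - y, v⟫ - ε) ≥ (1 - σ²) / 2 * (‖λ v‖² + ‖y - x‖²)`. By Cauchy–Schwarz, every
point `p` satisfying that inequality has `⟪x - y, v⟫ - ε ≤ ‖p - x‖ ‖v‖`. With
`m = max (λ ‖v‖) ‖x - y‖`, the two bounds give `(1 - σ²) / 2 * m² ≤ m ‖p - x‖`. -/

section HalfSpace

variable {E : Type*} [SeminormedAddCommGroup E] [InnerProductSpace ℝ E]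

theorem inner_sub_le_norm_mul_norm_of_inner_sub_le {p y v : E} {ε : ℝ} (hp : ⟪p - y, v⟫ ≤ ε)
    (x : E) : ⟪x - y, v⟫ - ε ≤ ‖p - x‖ * ‖v‖ :=
  calc
    ⟪x - y, v⟫ - ε ≤ ⟪x - y, v⟫ - ⟪p - y, v⟫ := by gcongr
    _ = ⟪x - p, v⟫ := by rw [← inner_sub_left, sub_sub_sub_cancel_right]
    _ ≤ ‖x - p‖ * ‖v‖ := real_inner_le_norm _ _
    _ = ‖p - x‖ * ‖v‖ := by rw [norm_sub_rev]

theorem norm_smul_add_sub_sq_add_le_iff (lam σ ε : ℝ) (x y v : E) :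
    ‖lam • v + y - x‖ ^ 2 + 2 * lam * ε ≤ σ ^ 2 * (‖lam • v‖ ^ 2 + ‖y - x‖ ^ 2) ↔
      (1 - σ ^ 2) / 2 * (‖lam • v‖ ^ 2 + ‖y - x‖ ^ 2) ≤ lam * (⟪x - y, v⟫ - ε) := by
  have hexpand : ‖lam • v + y - x‖ ^ 2 =
      ‖lam • v‖ ^ 2 + ‖y - x‖ ^ 2 - 2 * (lam * ⟪x - y, v⟫) := by
    rw [add_sub_assoc, ← neg_sub x y, norm_neg, ← sub_eq_add_neg, norm_sub_sq_real,
      real_inner_smul_left, real_inner_comm]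
    ring
  rw [hexpand]
  constructor <;> intro <;> linarith

end HalfSpace

theorem mul_max_le_of_mul_sq_add_sq_le {R : Type*} [CommRing R] [LinearOrder R]
    [IsStrictOrderedRing R] {k a b d : R} (ha : 0 ≤ a) (hd : 0 ≤ d)
    (h : k * (a ^ 2 + b ^ 2) ≤ a * d) : k * max a b ≤ d := by
  have hm : 0 ≤ max a b := ha.trans (le_max_left a b)
  rcases le_total k 0 with hk | hk
  · exact (mul_nonpos_of_nonpos_of_nonneg hk hm).trans hd
  rcases hm.eq_or_lt with hm0 | hm0
  · rwa [← hm0, mul_zero]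
  have hsq : max a b ^ 2 ≤ a ^ 2 + b ^ 2 := by
    rcases max_choice a b with hab | hab <;> rw [hab]
    · exact le_add_of_nonneg_right (sq_nonneg b)
    · exact le_add_of_nonneg_left (sq_nonneg a)
  refine le_of_mul_le_mul_left ?_ hm0
  calc
    max a b * (k * max a b) = k * max a b ^ 2 := by ring
    _ ≤ k * (a ^ 2 + b ^ 2) := by gcongr
    _ ≤ a * d := h
    _ ≤ max a b * d := by gcongr; exact le_max_left a b

theorem stmt2_general {E : Type*} [SeminormedAddCommGroup E] [InnerProductSpace ℝ E]
    {lam σ ε : ℝ} (hlam : 0 ≤ lam) {x y v p : E}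
    (herr : ‖lam • v + y - x‖ ^ 2 + 2 * lam * ε ≤
      σ ^ 2 * (‖lam • v‖ ^ 2 + ‖y - x‖ ^ 2))
    (hp : ⟪p - y, v⟫ ≤ ε) :
    (1 - σ ^ 2) / 2 * max (lam * ‖v‖) ‖x - y‖ ≤ ‖p - x‖ := by
  have hnorm : ‖lam • v‖ = lam * ‖v‖ := norm_smul_of_nonneg hlam v
  refine mul_max_le_of_mul_sq_add_sq_le (by positivity) (norm_nonneg _) ?_
  calc
    (1 - σ ^ 2) / 2 * ((lam * ‖v‖) ^ 2 + ‖x - y‖ ^ 2)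
        = (1 - σ ^ 2) / 2 * (‖lam • v‖ ^ 2 + ‖y - x‖ ^ 2) := by rw [hnorm, norm_sub_rev x y]
    _ ≤ lam * (⟪x - y, v⟫ - ε) := (norm_smul_add_sub_sq_add_le_iff lam σ ε x y v).1 herr
    _ ≤ lam * (‖p - x‖ * ‖v‖) := by
      gcongr
      exact inner_sub_le_norm_mul_norm_of_inner_sub_le hp x
    _ = lam * ‖v‖ * ‖p - x‖ := by ring

/-- Lemma 2.3: lower bound for the displacement of the projection of x onto the
half-space H' = {z : ⟪z - y, v⟫ ≤ ε}. -/
theorem stmt2 (T : H → Set H) (hT : IsMaxMonotoneOp T)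
    (lam σ ε : ℝ) (hlam : 0 < lam) (hσ0 : 0 ≤ σ) (hσ1 : σ < 1) (hε : 0 ≤ ε)
    (x y v : H)
    (hincl : v ∈ enl T ε y)
    (herr : ‖lam • v + y - x‖ ^ 2 + 2 * lam * ε ≤
      σ ^ 2 * (‖lam • v‖ ^ 2 + ‖y - x‖ ^ 2))
    (p : H) (hp : ⟪p - y, v⟫ ≤ ε)
    (hpmin : ∀ z : H, ⟪z - y, v⟫ ≤ ε → ‖p - x‖ ≤ ‖z - x‖) :
    (1 - σ ^ 2) / 2 * max (lam * ‖v‖) ‖x - y‖ ≤ ‖p - x‖ :=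
  stmt2_general hlam.le herr hp
end

section
/- Consider the sequences generated by Algorithm 1 and let d₀ denote the distance of x₀ to the solution set S := {x : 0 ∈ T(x)}. Then for every k ≥ 0, ‖x_k − x₀‖ ≤ d₀. -/
open scoped RealInnerProductSpace
open Filter Topology

variable {H : Type*} [NormedAddCommGroup H] [InnerProductSpace ℝ H] [CompleteSpace H]

/-!
Every zero of `T` lies in each cut `H_k`: test the `ε_k`-enlargement against the pair `(z, 0)`.
Every zero also lies in each `W_k`, by induction: `x_{k+1}` is the nearest point to `x₀` of the
convex set `H_k ∩ W_k`, which contains the zeros, and the variational inequality for that nearest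
point says precisely that `H_k ∩ W_k ⊆ W_{k+1}`. So each `x_{k+1}` is the minimizer of the distance
to `x₀` over a set containing all zeros, and is no farther from `x₀` than any of them.
-/

theorem dist_le_infDist_of_isMinOn {X : Type*} [PseudoMetricSpace X] {C S : Set X} {a p : X}
    (hmin : IsMinOn (dist a) C p) (hS : S.Nonempty) (hSC : S ⊆ C) :
    dist a p ≤ Metric.infDist a S :=
  (Metric.le_infDist hS).2 fun _ hz ↦ isMinOn_iff.1 hmin _ (hSC hz)

section Haugazeau

variable {E : Type*} [NormedAddCommGroup E] [InnerProductSpace ℝ E]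

/-- The half-space of points `z` with `⟪z - y, v⟫ ≤ ε`. Both half-spaces of Algorithm 1 have this
form: `H_k = cutHalfSpace (y k) (v k) (ε k)` and `W_k = cutHalfSpace (x k) (x 0 - x k) 0`. -/
def cutHalfSpace (y v : E) (ε : ℝ) : Set E :=
  {z | ⟪z - y, v⟫ ≤ ε}

theorem mem_cutHalfSpace {y v z : E} {ε : ℝ} : z ∈ cutHalfSpace y v ε ↔ ⟪z - y, v⟫ ≤ ε :=
  Iff.rfl

theorem convex_cutHalfSpace (y v : E) (ε : ℝ) : Convex ℝ (cutHalfSpace y v ε) := by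
  have hset : cutHalfSpace y v ε = {z | innerₗ E v z ≤ ε + ⟪y, v⟫} := by
    ext z
    change ⟪z - y, v⟫ ≤ ε ↔ ⟪v, z⟫ ≤ ε + ⟪y, v⟫
    rw [inner_sub_left, sub_le_iff_le_add, real_inner_comm]
  exact hset ▸ convex_halfSpace_le (innerₗ E v).isLinear _

theorem subset_cutHalfSpace_of_isMinOn {C : Set E} (hC : Convex ℝ C) {a p : E} (hp : p ∈ C)
    (hmin : IsMinOn (dist a) C p) : C ⊆ cutHalfSpace p (a - p) 0 := by
  have hdist : ‖a - p‖ = ⨅ z : C, ‖a - z‖ := by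
    simpa only [dist_eq_norm] using (hmin.iInf_eq hp).symm
  intro z hz
  rw [mem_cutHalfSpace, real_inner_comm]
  exact (norm_eq_iInf_iff_real_inner_le_zero hC hp).1 hdist z hz

theorem zeros_subset_cutHalfSpace_of_mem_enl {T : E → Set E} {ε : ℝ} {y v : E}
    (hv : v ∈ enl T ε y) : {z | (0 : E) ∈ T z} ⊆ cutHalfSpace y v ε := by
  intro z hz
  have h : -ε ≤ ⟪0 - v, z - y⟫ := hv z 0 hz
  rwa [zero_sub, inner_neg_left, neg_le_neg_iff, real_inner_comm] at h

/-- The sequences of Haugazeau's method for the sets `C k`: the point `x (k + 1)` is the projection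
of `x 0` onto the intersection of `C k` with the half-space `{z | ⟪z - x k, x 0 - x k⟫ ≤ 0}`.
Projections are encoded as minimizers of the distance to `x 0`. -/
structure IsHaugazeauSequence (C : ℕ → Set E) (x : ℕ → E) : Prop where
  mem (k : ℕ) : x (k + 1) ∈ C k ∩ cutHalfSpace (x k) (x 0 - x k) 0
  isMinOn (k : ℕ) : IsMinOn (dist (x 0)) (C k ∩ cutHalfSpace (x k) (x 0 - x k) 0) (x (k + 1))

namespace IsHaugazeauSequence

variable {C : ℕ → Set E} {x : ℕ → E} {S : Set E}

theorem subset_cutHalfSpace (hx : IsHaugazeauSequence C x) (hC : ∀ k, Convex ℝ (C k))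
    (hSC : ∀ k, S ⊆ C k) (k : ℕ) : S ⊆ cutHalfSpace (x k) (x 0 - x k) 0 := by
  induction k with
  | zero =>
    intro z _
    rw [mem_cutHalfSpace, sub_self, inner_zero_right]
  | succ k ih =>
    have hconv := (hC k).inter (convex_cutHalfSpace (x k) (x 0 - x k) 0)
    exact (Set.subset_inter (hSC k) ih).trans
      (subset_cutHalfSpace_of_isMinOn hconv (hx.mem k) (hx.isMinOn k))

theorem dist_le_infDist (hx : IsHaugazeauSequence C x) (hC : ∀ k, Convex ℝ (C k))
    (hS : S.Nonempty) (hSC : ∀ k, S ⊆ C k) (k : ℕ) :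
    dist (x 0) (x k) ≤ Metric.infDist (x 0) S := by
  cases k with
  | zero => simpa only [dist_self] using Metric.infDist_nonneg
  | succ k =>
    exact dist_le_infDist_of_isMinOn (hx.isMinOn k) hS
      (Set.subset_inter (hSC k) (hx.subset_cutHalfSpace hC hSC k))

end IsHaugazeauSequence

end Haugazeau

theorem stmt4_general {E : Type*} [NormedAddCommGroup E] [InnerProductSpace ℝ E]
    (T : E → Set E) (hS : {z : E | (0 : E) ∈ T z}.Nonempty) (ε : ℕ → ℝ) (x y v : ℕ → E)
    (hincl : ∀ k, v k ∈ enl T (ε k) (y k))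
    (hmem : ∀ k, ⟪x (k + 1) - y k, v k⟫ ≤ ε k ∧ ⟪x (k + 1) - x k, x 0 - x k⟫ ≤ 0)
    (hproj : ∀ k, ∀ z : E, ⟪z - y k, v k⟫ ≤ ε k → ⟪z - x k, x 0 - x k⟫ ≤ 0 →
      ‖x (k + 1) - x 0‖ ≤ ‖z - x 0‖) :
    ∀ k : ℕ, ‖x k - x 0‖ ≤ Metric.infDist (x 0) {z : E | (0 : E) ∈ T z} := by
  have hx : IsHaugazeauSequence (fun k ↦ cutHalfSpace (y k) (v k) (ε k)) x :=
    { mem := hmem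
      isMinOn := fun k ↦ isMinOn_iff.2 fun z hz ↦ by
        simpa only [dist_eq_norm'] using hproj k z hz.1 hz.2 }
  intro k
  rw [← dist_eq_norm']
  exact hx.dist_le_infDist (fun k ↦ convex_cutHalfSpace (y k) (v k) (ε k)) hS
    (fun k ↦ zeros_subset_cutHalfSpace_of_mem_enl (hincl k)) k

/-- Proposition 3.1(b): ‖x_k − x₀‖ ≤ d₀. -/
theorem stmt4
    (T : H → Set H) (hT : IsMaxMonotoneOp T)
    (hS : {z : H | (0 : H) ∈ T z}.Nonempty)
    (σ : ℝ) (hσ0 : 0 ≤ σ) (hσ1 : σ < 1)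
    (α β lam ε : ℕ → ℝ)
    (hα : ∀ k, 0 ≤ α k) (hβ : ∀ k, 0 ≤ β k)
    (hlam : ∀ k, 0 < lam k) (hε : ∀ k, 0 ≤ ε k)
    (x w wt y v : ℕ → H)
    (hw : ∀ k, w k = x k + α k • (x k - x (k - 1)))
    (hwt : ∀ k, wt k = w k + β k • (w k - x 0))
    (hincl : ∀ k, v k ∈ enl T (ε k) (y k))
    (herr : ∀ k, ‖lam k • v k + y k - wt k‖ ^ 2 + 2 * lam k * ε k ≤
      σ ^ 2 * (‖lam k • v k‖ ^ 2 + ‖y k - wt k‖ ^ 2))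
    (hmem : ∀ k, ⟪x (k + 1) - y k, v k⟫ ≤ ε k ∧ ⟪x (k + 1) - x k, x 0 - x k⟫ ≤ 0)
    (hproj : ∀ k, ∀ z : H, ⟪z - y k, v k⟫ ≤ ε k → ⟪z - x k, x 0 - x k⟫ ≤ 0 →
      ‖x (k + 1) - x 0‖ ≤ ‖z - x 0‖) :
    ∀ k : ℕ, ‖x k - x 0‖ ≤ Metric.infDist (x 0) {z : H | (0 : H) ∈ T z} :=
  stmt4_general T hS ε x y v hincl hmem hproj
end

section
/- Consider the sequences generated by Algorithm 1. Under Assumption 3.2, the sequence (x_k − y_k) converges strongly to 0 in H, i.e. ‖x_k − y_k‖ → 0 as k → ∞. -/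
open scoped RealInnerProductSpace
open Filter Topology

variable {H : Type*} [NormedAddCommGroup H] [InnerProductSpace ℝ H] [CompleteSpace H]

/-!
Each `x (k + 1)` is the projection of `x 0` onto a convex set, so every zero `p` of `T` stays in all
the half-spaces `H_k` and `W_k`. By Pythagoras in `W_k`, `‖x k - x 0‖ ^ 2` is nondecreasing, bounded
by `‖p - x 0‖ ^ 2`, and its increments dominate `‖x (k + 1) - x k‖ ^ 2`; hence the steps
`x (k + 1) - x k` vanish, and with them `wt k - x k`. Finally the relative error criterion controls
`‖y k - wt k‖` by the distance from `wt k` to any point of `H_k`, in particular to `x (k + 1)`.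
-/

theorem tendsto_zero_of_tendsto_norm_sq {E ι : Type*} [SeminormedAddCommGroup E] {l : Filter ι}
    {f : ι → E} (hf : Tendsto (fun i => ‖f i‖ ^ 2) l (𝓝 0)) : Tendsto f l (𝓝 0) := by
  rw [tendsto_zero_iff_norm_tendsto_zero]
  simpa only [Real.sqrt_sq (norm_nonneg _), Real.sqrt_zero] using hf.sqrt

theorem tendsto_extrapolation_sub {E ι : Type*} [SeminormedAddCommGroup E] [NormedSpace ℝ E]
    {l : Filter ι} {β : ι → ℝ} {x w : ι → E} {a : E} (hβ : Tendsto β l (𝓝 0))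
    (hx : IsBoundedUnder (· ≤ ·) l fun i => ‖x i - a‖)
    (hw : Tendsto (fun i => w i - x i) l (𝓝 0)) :
    Tendsto (fun i => w i + β i • (w i - a) - x i) l (𝓝 0) := by
  have hfar : Tendsto (fun i => β i • (x i - a)) l (𝓝 0) := hβ.zero_smul_isBoundedUnder_le hx
  have hlim := (hw.add (hβ.smul hw)).add hfar
  simp only [smul_zero, add_zero] at hlim
  refine hlim.congr fun i => ?_
  module

section HalfSpaces

variable {E : Type*} [NormedAddCommGroup E] [InnerProductSpace ℝ E]

/-- The half-space of the points `z` with `⟪z - y, v⟫ ≤ ε`. The set `H_k` of the algorithm is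
`slackHalfSpace (y k) (v k) (ε k)`, and `W_k` is `slackHalfSpace (x k) (x 0 - x k) 0`. The slack
`ε` may have either sign, and `v = 0` is allowed. -/
def slackHalfSpace (y v : E) (ε : ℝ) : Set E :=
  {z | ⟪z - y, v⟫ ≤ ε}

theorem convex_slackHalfSpace (y v : E) (ε : ℝ) : Convex ℝ (slackHalfSpace y v ε) := by
  have h : slackHalfSpace y v ε = {z | innerₗ E v z ≤ ε + ⟪y, v⟫} := by
    ext z
    simp only [slackHalfSpace, Set.mem_ofPred_eq, innerₗ_apply_apply, inner_sub_left,
      sub_le_iff_le_add, real_inner_comm]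
  exact h ▸ convex_halfSpace_le (innerₗ E v).isLinear _

theorem mem_slackHalfSpace_smul {y v z : E} {ε r : ℝ} (hr : 0 ≤ r)
    (hz : z ∈ slackHalfSpace y v ε) : z ∈ slackHalfSpace y (r • v) (r * ε) := by
  change ⟪z - y, r • v⟫ ≤ r * ε
  rw [real_inner_smul_right]
  exact mul_le_mul_of_nonneg_left hz hr

theorem subset_slackHalfSpace_of_isMinOn {K : Set E} (hK : Convex ℝ K) {a b : E} (hb : b ∈ K)
    (hmin : IsMinOn (fun z => ‖z - a‖) K b) : K ⊆ slackHalfSpace b (a - b) 0 := by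
  have : Nonempty K := ⟨⟨b, hb⟩⟩
  have hinf : ‖a - b‖ = ⨅ z : K, ‖a - z‖ := by
    refine le_antisymm (le_ciInf fun z => ?_)
      (ciInf_le ⟨0, Set.forall_mem_range.2 fun _ => norm_nonneg _⟩ (⟨b, hb⟩ : K))
    rw [norm_sub_rev a, norm_sub_rev a]
    exact hmin z.2
  intro z hz
  change ⟪z - b, a - b⟫ ≤ 0
  rw [real_inner_comm]
  exact (norm_eq_iInf_iff_real_inner_le_zero hK hb).1 hinf z hz

theorem norm_sub_sq_add_norm_sub_sq_le {a b z : E} (hz : z ∈ slackHalfSpace b (a - b) 0) :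
    ‖z - b‖ ^ 2 + ‖b - a‖ ^ 2 ≤ ‖z - a‖ ^ 2 := by
  have hinner : ⟪z - b, a - b⟫ ≤ 0 := hz
  have hexp := norm_sub_sq_real (z - b) (a - b)
  rw [sub_sub_sub_cancel_right, norm_sub_rev a b] at hexp
  linarith

theorem one_sub_mul_norm_sub_le_of_relative_error {y s w z : E} {δ τ : ℝ} (hτ : τ ≤ 1)
    (herr : ‖s + y - w‖ ^ 2 + 2 * δ ≤ τ * (‖s‖ ^ 2 + ‖y - w‖ ^ 2))
    (hz : z ∈ slackHalfSpace y s δ) : (1 - τ) * ‖y - w‖ ≤ ‖w - z‖ := by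
  have hsum : (1 - τ) * (‖s‖ ^ 2 + ‖y - w‖ ^ 2) ≤ 2 * (‖s‖ * ‖w - z‖) := by
    have hexp : ‖s + y - w‖ ^ 2 = ‖s‖ ^ 2 + 2 * ⟪s, y - w⟫ + ‖y - w‖ ^ 2 := by
      rw [add_sub_assoc, norm_add_sq_real]
    have hsplit : ⟪s, y - w⟫ = -⟪z - y, s⟫ - ⟪s, w - z⟫ := by
      rw [real_inner_comm s (z - y), ← inner_neg_right, ← inner_sub_right]
      congr 1
      abel
    have hδ : ⟪z - y, s⟫ ≤ δ := hz
    linarith [real_inner_le_norm s (w - z)]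
  refine le_of_sq_le_sq ?_ (norm_nonneg _)
  calc ((1 - τ) * ‖y - w‖) ^ 2
      = (1 - τ) * ((1 - τ) * (‖s‖ ^ 2 + ‖y - w‖ ^ 2)) - ((1 - τ) * ‖s‖) ^ 2 := by ring
    _ ≤ (1 - τ) * (2 * (‖s‖ * ‖w - z‖)) - ((1 - τ) * ‖s‖) ^ 2 :=
        sub_le_sub_right (mul_le_mul_of_nonneg_left hsum (sub_nonneg.2 hτ)) _
    _ = ‖w - z‖ ^ 2 - ((1 - τ) * ‖s‖ - ‖w - z‖) ^ 2 := by ring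
    _ ≤ ‖w - z‖ ^ 2 := sub_le_self _ (sq_nonneg _)

theorem mem_slackHalfSpace_of_mem_enl {T : E → Set E} {p y v : E} {ε : ℝ} (hp : 0 ∈ T p)
    (hv : v ∈ enl T ε y) : p ∈ slackHalfSpace y v ε := by
  have h : -ε ≤ ⟪0 - v, p - y⟫ := hv p 0 hp
  rwa [zero_sub, inner_neg_left, neg_le_neg_iff, real_inner_comm] at h

end HalfSpaces

section Haugazeau

variable {E : Type*} [NormedAddCommGroup E] [InnerProductSpace ℝ E]

/-- Haugazeau's outer-approximation scheme with cuts `C k`: the next iterate is the point nearest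
to the starting point `x 0` in the intersection of `C k` with `W_k`, the largest half-space onto
which `x 0` projects at `x k` (the whole space if `x k = x 0`). No closedness is imposed on `C k`;
the existence of the nearest point is part of the definition. -/
structure IsHaugazeauSeq (C : ℕ → Set E) (x : ℕ → E) : Prop where
  mem : ∀ k, x (k + 1) ∈ C k ∩ slackHalfSpace (x k) (x 0 - x k) 0
  isMinOn : ∀ k,
    IsMinOn (fun z => ‖z - x 0‖) (C k ∩ slackHalfSpace (x k) (x 0 - x k) 0) (x (k + 1))

namespace IsHaugazeauSeq

variable {C : ℕ → Set E} {x : ℕ → E} {p : E}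

theorem mem_slackHalfSpace (hx : IsHaugazeauSeq C x) (hC : ∀ k, Convex ℝ (C k))
    (hp : ∀ k, p ∈ C k) (k : ℕ) : p ∈ slackHalfSpace (x k) (x 0 - x k) 0 := by
  induction k with
  | zero => simp [slackHalfSpace]
  | succ k ih =>
    exact subset_slackHalfSpace_of_isMinOn ((hC k).inter (convex_slackHalfSpace _ _ _))
      (hx.mem k) (hx.isMinOn k) ⟨hp k, ih⟩

theorem norm_sub_le (hx : IsHaugazeauSeq C x) (hC : ∀ k, Convex ℝ (C k)) (hp : ∀ k, p ∈ C k)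
    (k : ℕ) : ‖x k - x 0‖ ≤ ‖p - x 0‖ := by
  have hpyth := norm_sub_sq_add_norm_sub_sq_le (hx.mem_slackHalfSpace hC hp k)
  exact le_of_sq_le_sq (by linarith [sq_nonneg ‖p - x k‖]) (norm_nonneg _)

theorem tendsto_succ_sub (hx : IsHaugazeauSeq C x) (hC : ∀ k, Convex ℝ (C k))
    (hp : ∀ k, p ∈ C k) : Tendsto (fun k => x (k + 1) - x k) atTop (𝓝 0) := by
  have hstep (k : ℕ) : ‖x (k + 1) - x k‖ ^ 2 ≤ ‖x (k + 1) - x 0‖ ^ 2 - ‖x k - x 0‖ ^ 2 :=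
    le_sub_iff_add_le.2 (norm_sub_sq_add_norm_sub_sq_le (hx.mem k).2)
  have hmono : Monotone fun k => ‖x k - x 0‖ ^ 2 :=
    monotone_nat_of_le_succ fun k => sub_nonneg.1 ((sq_nonneg _).trans (hstep k))
  have hbdd : BddAbove (Set.range fun k => ‖x k - x 0‖ ^ 2) :=
    ⟨‖p - x 0‖ ^ 2, Set.forall_mem_range.2 fun k =>
      pow_le_pow_left₀ (norm_nonneg _) (hx.norm_sub_le hC hp k) 2⟩
  have hlim := tendsto_atTop_ciSup hmono hbdd
  have hsq : Tendsto (fun k => ‖x (k + 1) - x k‖ ^ 2) atTop (𝓝 0) :=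
    squeeze_zero (fun _ => sq_nonneg _) hstep
      (by simpa only [sub_self] using ((tendsto_add_atTop_iff_nat 1).2 hlim).sub hlim)
  exact tendsto_zero_of_tendsto_norm_sq hsq

end IsHaugazeauSeq

end Haugazeau

theorem stmt8_general {E : Type*} [NormedAddCommGroup E] [InnerProductSpace ℝ E]
    {σ : ℝ} (hσ : σ ^ 2 < 1) {α β lam ε : ℕ → ℝ} (hlam : ∀ k, 0 ≤ lam k)
    {x w wt y v : ℕ → E} {p : E}
    (hw : ∀ k, w k = x k + α k • (x k - x (k - 1)))
    (hwt : ∀ k, wt k = w k + β k • (w k - x 0))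
    (hp : ∀ k, p ∈ slackHalfSpace (y k) (v k) (ε k))
    (herr : ∀ k, ‖lam k • v k + y k - wt k‖ ^ 2 + 2 * lam k * ε k ≤
      σ ^ 2 * (‖lam k • v k‖ ^ 2 + ‖y k - wt k‖ ^ 2))
    (hx : IsHaugazeauSeq (fun k => slackHalfSpace (y k) (v k) (ε k)) x)
    (hα : BddAbove (Set.range fun k => |α k|)) (hβ : Tendsto β atTop (𝓝 0)) :
    Tendsto (fun k => x k - y k) atTop (𝓝 0) := by
  have hconv (k : ℕ) := convex_slackHalfSpace (y k) (v k) (ε k)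
  have hstep : Tendsto (fun k => x (k + 1) - x k) atTop (𝓝 0) := hx.tendsto_succ_sub hconv hp
  have hback : Tendsto (fun k => x k - x (k - 1)) atTop (𝓝 0) :=
    (tendsto_add_atTop_iff_nat 1).1 hstep
  have hwx : Tendsto (fun k => w k - x k) atTop (𝓝 0) := by
    simpa only [hw, add_sub_cancel_left] using hα.isBoundedUnder_of_range.smul_tendsto_zero hback
  have hwtx : Tendsto (fun k => wt k - x k) atTop (𝓝 0) := by
    simpa only [hwt] using tendsto_extrapolation_sub hβ
      (isBoundedUnder_of ⟨‖p - x 0‖, hx.norm_sub_le hconv hp⟩) hwx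
  have hwtnext : Tendsto (fun k => ‖wt k - x (k + 1)‖ / (1 - σ ^ 2)) atTop (𝓝 0) := by
    simpa only [sub_sub_sub_cancel_right, sub_zero, norm_zero, zero_div]
      using (hwtx.sub hstep).norm.div_const (1 - σ ^ 2)
  have hywt : Tendsto (fun k => y k - wt k) atTop (𝓝 0) := by
    refine squeeze_zero_norm (fun k => ?_) hwtnext
    rw [le_div_iff₀' (sub_pos.2 hσ)]
    exact one_sub_mul_norm_sub_le_of_relative_error hσ.le (by simpa only [mul_assoc] using herr k)
      (mem_slackHalfSpace_smul (hlam k) (hx.mem k).1)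
  simpa only [sub_add_sub_cancel, neg_sub, add_zero, neg_zero] using (hywt.add hwtx).neg

/-- Proposition 3.3(c): x_k − y_k → 0 strongly. -/
theorem stmt8
    (T : H → Set H) (hT : IsMaxMonotoneOp T)
    (hS : {z : H | (0 : H) ∈ T z}.Nonempty)
    (σ : ℝ) (hσ0 : 0 ≤ σ) (hσ1 : σ < 1)
    (α β lam ε : ℕ → ℝ)
    (hα : ∀ k, 0 ≤ α k) (hβ : ∀ k, 0 ≤ β k)
    (hlam : ∀ k, 0 < lam k) (hε : ∀ k, 0 ≤ ε k)
    (x w wt y v : ℕ → H)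
    (hw : ∀ k, w k = x k + α k • (x k - x (k - 1)))
    (hwt : ∀ k, wt k = w k + β k • (w k - x 0))
    (hincl : ∀ k, v k ∈ enl T (ε k) (y k))
    (herr : ∀ k, ‖lam k • v k + y k - wt k‖ ^ 2 + 2 * lam k * ε k ≤
      σ ^ 2 * (‖lam k • v k‖ ^ 2 + ‖y k - wt k‖ ^ 2))
    (hmem : ∀ k, ⟪x (k + 1) - y k, v k⟫ ≤ ε k ∧ ⟪x (k + 1) - x k, x 0 - x k⟫ ≤ 0)
    (hproj : ∀ k, ∀ z : H, ⟪z - y k, v k⟫ ≤ ε k → ⟪z - x k, x 0 - x k⟫ ≤ 0 →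
      ‖x (k + 1) - x 0‖ ≤ ‖z - x 0‖)
    (habdd : BddAbove (Set.range α)) (hbbdd : BddAbove (Set.range β))
    (hsum : Summable fun k => β k ^ 2) :
    Tendsto (fun k => x k - y k) atTop (𝓝 0) := by
  obtain ⟨p, hp⟩ := hS
  exact stmt8_general ((sq_lt_one_iff₀ hσ0).2 hσ1) (fun k => (hlam k).le) hw hwt
    (fun k => mem_slackHalfSpace_of_mem_enl hp (hincl k)) herr
    ⟨hmem, fun k z hz => hproj k z hz.1 hz.2⟩ (by simpa only [abs_of_nonneg (hα _)] using habdd)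
    (tendsto_zero_of_tendsto_norm_sq
      (by simpa only [Real.norm_eq_abs, sq_abs] using hsum.tendsto_atTop_zero))
end

section
/- (Strong convergence of Algorithm 1.) Consider the sequences generated by Algorithm 1, suppose Assumption 3.2 holds and suppose there exists λ̲ > 0 with λ_k ≥ λ̲ for all k ≥ 0. Let x* be the point of S = {x : 0 ∈ T(x)} satisfying ‖x* − x₀‖ ≤ ‖z − x₀‖ for all z ∈ S (the orthogonal projection of x₀ onto S). Then (x_k) and (y_k) both converge strongly to x*: ‖x_k − x*‖ → 0 and ‖y_k − x*‖ → 0. -/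
/-!
Every zero of `T` lies in all the half-spaces `H_k` and `W_k`, so the distances `‖x_k - x₀‖`
increase and are bounded by `‖x* - x₀‖`; the inequality defining `W_k` then forces
`x_{k+1} - x_k → 0`, hence `w̃_k - x_{k+1} → 0`. Since `x_{k+1} ∈ H_k`, the relative error criterion
turns this into `y_k - w̃_k → 0`, `v_k → 0` and `ε_k → 0`. The graph of the enlargement is
weak–strong closed, so weak cluster points of `(x_k)` are zeros of `T`. Finally, a point `x` of the
ball of radius `‖x* - x₀‖` about `x₀` satisfies `‖x - x*‖² ≤ 2 ⟪x - x*, x₀ - x*⟫`. At a zero of `T`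
the right-hand side is nonpositive by the variational characterisation of the projection, so weak
convergence is strong.
-/

open scoped RealInnerProductSpace
open Filter Topology

variable {H : Type*} [NormedAddCommGroup H] [InnerProductSpace ℝ H] [CompleteSpace H]

section Normed

variable {ι 𝕜 F : Type*} [NormedField 𝕜] [SeminormedAddCommGroup F] {l : Filter ι}

lemma tendsto_zero_of_norm_sq_le {f : ι → F} {g : ι → ℝ} (hfg : ∀ k, ‖f k‖ ^ 2 ≤ g k)
    (hg : Tendsto g l (𝓝 0)) : Tendsto f l (𝓝 0) := by
  have hsqrt : Tendsto (fun k => √(g k)) l (𝓝 0) := by simpa using hg.sqrt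
  exact squeeze_zero_norm (fun k => Real.le_sqrt_of_sq_le (hfg k)) hsqrt

lemma isBoundedUnder_norm_of_sub {f g : ι → F} (hf : IsBoundedUnder (· ≤ ·) l (norm ∘ f))
    (hgf : IsBoundedUnder (· ≤ ·) l (norm ∘ fun k => g k - f k)) :
    IsBoundedUnder (· ≤ ·) l (norm ∘ g) :=
  (isBoundedUnder_le_add hf hgf).mono_le <| .of_forall fun _ => norm_le_norm_add_norm_sub' _ _

variable [NormedSpace 𝕜 F]

lemma tendsto_zero_of_smul_tendsto_zero {c : ι → 𝕜} {f : ι → F} {b : ℝ} (hb : 0 < b)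
    (hc : ∀ k, b ≤ ‖c k‖) (h : Tendsto (fun k => c k • f k) l (𝓝 0)) : Tendsto f l (𝓝 0) := by
  refine squeeze_zero_norm (fun k => ?_) (by simpa using h.norm.div_const b)
  rw [le_div_iff₀' hb, norm_smul]
  gcongr
  exact hc k

lemma tendsto_extrapolation_sub_s10 {x d : ι → F} {p : F} {α β : ι → 𝕜}
    (hx : IsBoundedUnder (· ≤ ·) l (norm ∘ fun k => x k - p)) (hd : Tendsto d l (𝓝 0))
    (hα : IsBoundedUnder (· ≤ ·) l (norm ∘ α)) (hβ : Tendsto β l (𝓝 0)) :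
    Tendsto (fun k => x k + α k • d k + β k • (x k + α k • d k - p) - x k) l (𝓝 0) := by
  have hαd : Tendsto (fun k => α k • d k) l (𝓝 0) := hα.smul_tendsto_zero hd
  have hβx : Tendsto (fun k => β k • (x k - p)) l (𝓝 0) := hβ.zero_smul_isBoundedUnder_le hx
  have hsum := (hαd.add hβx).add (hβ.smul hαd)
  simp only [smul_zero, add_zero] at hsum
  exact hsum.congr fun k => by module

end Normed

section InnerProductSpace

variable {ι E : Type*} [NormedAddCommGroup E] [InnerProductSpace ℝ E] {l : Filter ι}

lemma inner_sub_sub_nonpos_of_isMinOn {K : Set E} (hK : Convex ℝ K) {a p z : E} (ha : a ∈ K)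
    (hmin : IsMinOn (‖· - p‖) K a) (hz : z ∈ K) : ⟪z - a, p - a⟫ ≤ 0 := by
  have : Nonempty K := ⟨⟨a, ha⟩⟩
  have hinf : ‖p - a‖ = ⨅ w : K, ‖p - w‖ := by
    refine le_antisymm (le_ciInf fun w => ?_) (ciInf_le ⟨0, ?_⟩ (⟨a, ha⟩ : K))
    · simpa only [norm_sub_rev p] using isMinOn_iff.1 hmin w w.2
    · rintro _ ⟨w, rfl⟩
      exact norm_nonneg _
  rw [real_inner_comm]
  exact (norm_eq_iInf_iff_real_inner_le_zero hK ha).1 hinf z hz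

lemma norm_sub_sq_le_of_norm_sub_le {x a p : E} (h : ‖x - p‖ ≤ ‖a - p‖) :
    ‖x - a‖ ^ 2 ≤ 2 * ⟪x - a, p - a⟫ := by
  have hsq : ‖x - p‖ ^ 2 ≤ ‖a - p‖ ^ 2 := by gcongr
  rw [← sub_sub_sub_cancel_right x p a, norm_sub_sq_real, norm_sub_rev p a] at hsq
  linarith

/-- Weak convergence of `x` to `z` along `l`, tested against inner products only; by the Riesz
representation theorem this is convergence in the weak topology when `E` is complete. -/
def TendstoWeakly (x : ι → E) (l : Filter ι) (z : E) : Prop :=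
  ∀ h, Tendsto (fun k => ⟪x k, h⟫) l (𝓝 ⟪z, h⟫)

namespace TendstoWeakly

variable {x y a : ι → E} {z b : E}

lemma of_tendsto_sub (hx : TendstoWeakly x l z) (hyx : Tendsto (fun k => y k - x k) l (𝓝 0)) :
    TendstoWeakly y l z := fun h => by
  have hsum := (hx h).add (hyx.inner (tendsto_const_nhds (x := h)))
  simpa [← inner_add_left] using hsum

lemma inner (hx : TendstoWeakly x l z) (hbdd : IsBoundedUnder (· ≤ ·) l (norm ∘ x))
    (ha : Tendsto a l (𝓝 b)) : Tendsto (fun k => ⟪x k, a k⟫) l (𝓝 ⟪z, b⟫) := by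
  have hzero : Tendsto (fun k => ⟪a k - b, x k⟫) l (𝓝 0) :=
    (tendsto_sub_nhds_zero_iff.2 ha).op_zero_isBoundedUnder_le hbdd (fun u w => ⟪u, w⟫)
      norm_inner_le_norm
  have hsum := (hx b).add hzero
  simp only [add_zero] at hsum
  exact hsum.congr fun k => by
    rw [real_inner_comm, ← inner_add_left, add_sub_cancel, real_inner_comm]

end TendstoWeakly

/-- The half-space `{z | ⟪z - a, b⟫ ≤ c}`. It is the set `H_k` of the algorithm for
`(a, b, c) = (y_k, v_k, ε_k)` and the set `W_k` for `(a, b, c) = (x_k, x₀ - x_k, 0)`. -/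
def halfSpace (a b : E) (c : ℝ) : Set E :=
  {z | ⟪z - a, b⟫ ≤ c}

lemma convex_halfSpace (a b : E) (c : ℝ) : Convex ℝ (halfSpace a b c) := by
  have hset : halfSpace a b c = {z | innerₗ E b z ≤ c + ⟪a, b⟫} := by
    ext z
    simp only [halfSpace, Set.mem_ofPred_eq, innerₗ_apply_apply, inner_sub_left, sub_le_iff_le_add,
      real_inner_comm z b]
  rw [hset]
  exact convex_halfSpace_le (innerₗ E b).isLinear _

/-- Haugazeau's scheme: `x (k + 1)` is the projection of the starting point `x 0` onto the
intersection of the convex set `C k` with the half-space of points which `x k` separates from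
`x 0`. -/
structure IsHaugazeau (C : ℕ → Set E) (x : ℕ → E) : Prop where
  convex : ∀ k, Convex ℝ (C k)
  mem_inter : ∀ k, x (k + 1) ∈ C k ∩ halfSpace (x k) (x 0 - x k) 0
  isMinOn : ∀ k, IsMinOn (‖· - x 0‖) (C k ∩ halfSpace (x k) (x 0 - x k) 0) (x (k + 1))

namespace IsHaugazeau

variable {C : ℕ → Set E} {x : ℕ → E} {z : E}

lemma mem_halfSpace (hx : IsHaugazeau C x) (hz : ∀ k, z ∈ C k) (k : ℕ) :
    z ∈ halfSpace (x k) (x 0 - x k) 0 := by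
  induction k with
  | zero => simp [halfSpace]
  | succ k ih =>
    exact inner_sub_sub_nonpos_of_isMinOn ((hx.convex k).inter (convex_halfSpace _ _ _))
      (hx.mem_inter k) (hx.isMinOn k) ⟨hz k, ih⟩

lemma norm_sub_le (hx : IsHaugazeau C x) (hz : ∀ k, z ∈ C k) (k : ℕ) :
    ‖x k - x 0‖ ≤ ‖z - x 0‖ := by
  cases k with
  | zero => simp
  | succ k => exact hx.isMinOn k ⟨hz k, hx.mem_halfSpace hz k⟩

lemma isBoundedUnder_norm_sub (hx : IsHaugazeau C x) (hz : ∀ k, z ∈ C k) (l : Filter ℕ) :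
    IsBoundedUnder (· ≤ ·) l (norm ∘ fun k => x k - x 0) :=
  isBoundedUnder_of ⟨‖z - x 0‖, hx.norm_sub_le hz⟩

lemma norm_succ_sub_sq_le (hx : IsHaugazeau C x) (k : ℕ) :
    ‖x (k + 1) - x k‖ ^ 2 ≤ ‖x (k + 1) - x 0‖ ^ 2 - ‖x k - x 0‖ ^ 2 := by
  have hinner : ⟪x (k + 1) - x k, x 0 - x k⟫ ≤ 0 := (hx.mem_inter k).2
  rw [← sub_sub_sub_cancel_right (x (k + 1)) (x 0) (x k), norm_sub_sq_real (x (k + 1) - x k),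
    norm_sub_rev (x 0)]
  linarith

lemma tendsto_succ_sub (hx : IsHaugazeau C x) (hz : ∀ k, z ∈ C k) :
    Tendsto (fun k => x (k + 1) - x k) atTop (𝓝 0) := by
  have hmono : Monotone fun k => ‖x k - x 0‖ ^ 2 := monotone_nat_of_le_succ fun k =>
    sub_nonneg.1 ((sq_nonneg _).trans (hx.norm_succ_sub_sq_le k))
  have hbdd : BddAbove (Set.range fun k => ‖x k - x 0‖ ^ 2) := by
    refine ⟨‖z - x 0‖ ^ 2, ?_⟩
    rintro _ ⟨k, rfl⟩
    exact pow_le_pow_left₀ (norm_nonneg _) (hx.norm_sub_le hz k) 2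
  have hlim := tendsto_atTop_ciSup hmono hbdd
  have hdiff := ((tendsto_add_atTop_iff_nat 1).2 hlim).sub hlim
  rw [sub_self] at hdiff
  exact tendsto_zero_of_norm_sq_le hx.norm_succ_sub_sq_le hdiff

lemma tendsto_inertial_sub (hx : IsHaugazeau C x) (hz : ∀ k, z ∈ C k) {α β : ℕ → ℝ} {w wt : ℕ → E}
    (hw : ∀ k, w k = x k + α k • (x k - x (k - 1))) (hwt : ∀ k, wt k = w k + β k • (w k - x 0))
    (hα : IsBoundedUnder (· ≤ ·) atTop (norm ∘ α)) (hβ : Tendsto β atTop (𝓝 0)) :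
    Tendsto (fun k => wt k - x k) atTop (𝓝 0) := by
  have hpred : Tendsto (fun k => x k - x (k - 1)) atTop (𝓝 0) :=
    (tendsto_add_atTop_iff_nat 1).1 (hx.tendsto_succ_sub hz)
  simpa only [hwt, hw] using
    tendsto_extrapolation_sub_s10 (hx.isBoundedUnder_norm_sub hz _) hpred hα hβ

end IsHaugazeau

variable {T : E → Set E}

lemma mem_enl_iff_mem_halfSpace {ε : ℝ} {y v : E} :
    v ∈ enl T ε y ↔ ∀ z u, u ∈ T z → y ∈ halfSpace z (u - v) ε := by
  refine forall₃_congr fun z u _ => ?_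
  rw [halfSpace, Set.mem_ofPred_eq, ← neg_sub z y, inner_neg_left, real_inner_comm, ge_iff_le,
    neg_le]

lemma mem_halfSpace_of_mem_enl {ε : ℝ} {y v z : E} (hv : v ∈ enl T ε y) (hz : 0 ∈ T z) :
    z ∈ halfSpace y v ε := by
  have hy := mem_enl_iff_mem_halfSpace.1 hv z 0 hz
  rwa [halfSpace, Set.mem_ofPred_eq, zero_sub, inner_neg_right, ← inner_neg_left, neg_sub] at hy

lemma convex_setOf_mem_enl (T : E → Set E) (ε : ℝ) (v : E) : Convex ℝ {y | v ∈ enl T ε y} := by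
  simp only [mem_enl_iff_mem_halfSpace, Set.ofPred_forall]
  exact convex_iInter fun z => convex_iInter fun u => convex_iInter fun _ => convex_halfSpace ..

lemma mem_enl_of_tendstoWeakly [l.NeBot] {ε : ι → ℝ} {y v : ι → E} {ε' : ℝ} {y' v' : E}
    (hmem : ∀ k, v k ∈ enl T (ε k) (y k)) (hε : Tendsto ε l (𝓝 ε')) (hy : TendstoWeakly y l y')
    (hybdd : IsBoundedUnder (· ≤ ·) l (norm ∘ y)) (hv : Tendsto v l (𝓝 v')) :
    v' ∈ enl T ε' y' := by
  refine mem_enl_iff_mem_halfSpace.2 fun z u hu => ?_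
  have huv : Tendsto (fun k => u - v k) l (𝓝 (u - v')) := hv.const_sub u
  have hlim : Tendsto (fun k => ⟪y k - z, u - v k⟫) l (𝓝 ⟪y' - z, u - v'⟫) := by
    simp only [inner_sub_left]
    exact (hy.inner hybdd huv).sub (tendsto_const_nhds.inner huv)
  exact le_of_tendsto_of_tendsto' hlim hε fun k => mem_enl_iff_mem_halfSpace.1 (hmem k) z u hu

namespace IsMaxMonotoneOp

lemma enl_zero (hT : IsMaxMonotoneOp T) (y : E) : enl T 0 y = T y := by
  ext v
  simp only [enl, neg_zero, ge_iff_le, Set.mem_ofPred_eq]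
  exact ⟨hT.2 y v, fun hv z u hu => hT.1 z y u v hu hv⟩

lemma convex_setOf_mem (hT : IsMaxMonotoneOp T) (v : E) : Convex ℝ {y | v ∈ T y} := by
  simpa only [hT.enl_zero] using convex_setOf_mem_enl T 0 v

lemma nonneg_of_mem_enl (hT : IsMaxMonotoneOp T) {ε : ℝ} {y v : E} (hv : v ∈ enl T ε y) :
    0 ≤ ε := by
  by_contra! hε
  have hvT : v ∈ T y := hT.2 y v fun z u hu => (neg_nonneg.2 hε.le).trans (hv z u hu)
  have hle : 0 ≤ ε := by simpa using hv y v hvT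
  exact hε.not_ge hle

end IsMaxMonotoneOp

/-- The pair `(y, v)` solves the proximal subproblem `v ∈ T y`, `lam • v + y = w` up to the
enlargement parameter `ε` and a residual, both controlled by the relative tolerance `σ`. -/
structure IsInexactProx (T : E → Set E) (σ lam ε : ℝ) (w y v : E) : Prop where
  mem_enl : v ∈ enl T ε y
  residual_le : ‖lam • v + y - w‖ ^ 2 + 2 * lam * ε ≤ σ ^ 2 * (‖lam • v‖ ^ 2 + ‖y - w‖ ^ 2)

namespace IsInexactProx

lemma mul_sq_add_sq_le {σ lam ε : ℝ} {w y v z : E} (h : IsInexactProx T σ lam ε w y v)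
    (hlam : 0 ≤ lam) (hz : z ∈ halfSpace y v ε) :
    (1 - σ ^ 2) / 2 * (‖lam • v‖ ^ 2 + ‖y - w‖ ^ 2) ≤ ‖z - w‖ * ‖lam • v‖ := by
  have hres := h.residual_le
  rw [add_sub_assoc, norm_add_sq_real] at hres
  have hsep : lam * ⟪z - y, v⟫ ≤ lam * ε := mul_le_mul_of_nonneg_left hz hlam
  have hsplit : lam * ⟪z - y, v⟫ = ⟪z - w, lam • v⟫ - ⟪lam • v, y - w⟫ := by
    rw [real_inner_comm (y - w), ← inner_sub_left, sub_sub_sub_cancel_right, real_inner_smul_right]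
  have hcs : -(‖z - w‖ * ‖lam • v‖) ≤ ⟪z - w, lam • v⟫ :=
    neg_le_of_abs_le (abs_real_inner_le_norm _ _)
  linarith

lemma sq_add_sq_le {σ lam ε : ℝ} {w y v z : E} (h : IsInexactProx T σ lam ε w y v)
    (hσ : σ ^ 2 < 1) (hlam : 0 ≤ lam) (hz : z ∈ halfSpace y v ε) :
    ‖lam • v‖ ^ 2 + ‖y - w‖ ^ 2 ≤ (‖z - w‖ / ((1 - σ ^ 2) / 2)) ^ 2 := by
  have hc : 0 < (1 - σ ^ 2) / 2 := by linarith
  have hle : ‖lam • v‖ ^ 2 + ‖y - w‖ ^ 2 ≤ ‖z - w‖ / ((1 - σ ^ 2) / 2) * ‖lam • v‖ := by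
    rw [div_mul_eq_mul_div, le_div_iff₀' hc]
    exact h.mul_sq_add_sq_le hlam hz
  linarith [two_mul_le_add_sq (‖z - w‖ / ((1 - σ ^ 2) / 2)) ‖lam • v‖, sq_nonneg ‖y - w‖]

variable {σ b : ℝ} {lam ε : ι → ℝ} {w y v z : ι → E}

lemma tendsto_sq_add_sq (h : ∀ k, IsInexactProx T σ (lam k) (ε k) (w k) (y k) (v k))
    (hσ : σ ^ 2 < 1) (hlam : ∀ k, 0 ≤ lam k) (hz : ∀ k, z k ∈ halfSpace (y k) (v k) (ε k))
    (hzw : Tendsto (fun k => z k - w k) l (𝓝 0)) :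
    Tendsto (fun k => ‖lam k • v k‖ ^ 2 + ‖y k - w k‖ ^ 2) l (𝓝 0) := by
  refine squeeze_zero (fun k => by positivity)
    (fun k => (h k).sq_add_sq_le hσ (hlam k) (hz k)) ?_
  simpa using (hzw.norm.div_const ((1 - σ ^ 2) / 2)).pow 2

lemma tendsto_eps (h : ∀ k, IsInexactProx T σ (lam k) (ε k) (w k) (y k) (v k))
    (hσ : σ ^ 2 < 1) (hε : ∀ k, 0 ≤ ε k) (hb : 0 < b) (hlam : ∀ k, b ≤ lam k)
    (hsq : Tendsto (fun k => ‖lam k • v k‖ ^ 2 + ‖y k - w k‖ ^ 2) l (𝓝 0)) :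
    Tendsto ε l (𝓝 0) := by
  refine squeeze_zero hε (fun k => ?_) (by simpa using hsq.div_const (2 * b))
  rw [le_div_iff₀' (by positivity)]
  calc 2 * b * ε k ≤ 2 * lam k * ε k := by gcongr; exacts [hε k, hlam k]
    _ ≤ ‖lam k • v k + y k - w k‖ ^ 2 + 2 * lam k * ε k := le_add_of_nonneg_left (sq_nonneg _)
    _ ≤ σ ^ 2 * (‖lam k • v k‖ ^ 2 + ‖y k - w k‖ ^ 2) := (h k).residual_le
    _ ≤ ‖lam k • v k‖ ^ 2 + ‖y k - w k‖ ^ 2 := mul_le_of_le_one_left (by positivity) hσ.le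

end IsInexactProx

end InnerProductSpace

lemma exists_tendstoWeakly {ι : Type*} {x : ι → H} (U : Ultrafilter ι)
    (hx : IsBoundedUnder (· ≤ ·) U (norm ∘ x)) : ∃ z, TendstoWeakly x U z := by
  obtain ⟨M, hM⟩ := hx
  let f : ι → WeakDual ℝ H := fun k => StrongDual.toWeakDual (InnerProductSpace.toDual ℝ H (x k))
  have hball : ∀ᶠ k in U, f k ∈ WeakDual.toStrongDual ⁻¹' Metric.closedBall 0 M := by
    filter_upwards [eventually_map.1 hM] with k hk
    simpa [f] using hk
  obtain ⟨φ, -, hφ⟩ := (WeakDual.isCompact_closedBall 0 M).ultrafilter_le_nhds (U.map f)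
    (le_principal_iff.2 hball)
  refine ⟨(InnerProductSpace.toDual ℝ H).symm (WeakDual.toStrongDual φ), fun h => ?_⟩
  rw [InnerProductSpace.toDual_symm_apply]
  exact ((WeakDual.eval_continuous h).tendsto φ).comp hφ

lemma tendsto_of_forall_tendstoWeakly_mem {ι : Type*} {l : Filter ι} {x : ι → H} {K : Set H}
    {a p : H} (hK : Convex ℝ K) (ha : a ∈ K) (hmin : IsMinOn (‖· - p‖) K a)
    (hx : ∀ k, ‖x k - p‖ ≤ ‖a - p‖)
    (hcluster : ∀ (U : Ultrafilter ι) (z : H), ↑U ≤ l → TendstoWeakly x U z → z ∈ K) :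
    Tendsto x l (𝓝 a) := by
  refine (tendsto_iff_ultrafilter _ _ _).2 fun U hU => ?_
  have hbdd : IsBoundedUnder (· ≤ ·) U (norm ∘ x) :=
    isBoundedUnder_norm_of_sub (f := fun _ => p) isBoundedUnder_const (isBoundedUnder_of ⟨_, hx⟩)
  obtain ⟨z, hz⟩ := exists_tendstoWeakly U hbdd
  have hle : ∀ k, ‖x k - a‖ ^ 2 ≤ 2 * ⟪x k - a, p - a⟫ := fun k =>
    norm_sub_sq_le_of_norm_sub_le (hx k)
  have hlim : Tendsto (fun k => 2 * ⟪x k - a, p - a⟫) U (𝓝 (2 * ⟪z - a, p - a⟫)) := by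
    simp only [inner_sub_left _ a]
    exact ((hz _).sub_const _).const_mul 2
  have hnonpos : ⟪z - a, p - a⟫ ≤ 0 :=
    inner_sub_sub_nonpos_of_isMinOn hK ha hmin (hcluster U z hU hz)
  have hnonneg : 0 ≤ 2 * ⟪z - a, p - a⟫ := ge_of_tendsto' hlim fun k => (sq_nonneg _).trans (hle k)
  rw [show 2 * ⟪z - a, p - a⟫ = 0 by linarith] at hlim
  exact tendsto_sub_nhds_zero_iff.1 (tendsto_zero_of_norm_sq_le hle hlim)

theorem stmt10_general {T : H → Set H} (hT : IsMaxMonotoneOp T) {σ : ℝ} (hσ : σ ^ 2 < 1)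
    {lam ε : ℕ → ℝ} {x wt y v : ℕ → H}
    (hstep : ∀ k, IsInexactProx T σ (lam k) (ε k) (wt k) (y k) (v k))
    (hx : IsHaugazeau (fun k => halfSpace (y k) (v k) (ε k)) x)
    (hwt : Tendsto (fun k => wt k - x k) atTop (𝓝 0))
    {lamlb : ℝ} (hlamlb : 0 < lamlb) (hlam_lb : ∀ k, lamlb ≤ lam k)
    {xstar : H} (hxstarS : (0 : H) ∈ T xstar)
    (hxstar : IsMinOn (‖· - x 0‖) {z | (0 : H) ∈ T z} xstar) :
    Tendsto x atTop (𝓝 xstar) ∧ Tendsto y atTop (𝓝 xstar) := by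
  have hsep : ∀ k, xstar ∈ halfSpace (y k) (v k) (ε k) := fun k =>
    mem_halfSpace_of_mem_enl (hstep k).mem_enl hxstarS
  have hnext : Tendsto (fun k => x (k + 1) - wt k) atTop (𝓝 0) := by
    simpa using (hx.tendsto_succ_sub hsep).sub hwt
  have hsq := IsInexactProx.tendsto_sq_add_sq hstep hσ (fun k => hlamlb.le.trans (hlam_lb k))
    (fun k => (hx.mem_inter k).1) hnext
  have hε : Tendsto ε atTop (𝓝 0) := IsInexactProx.tendsto_eps hstep hσ
    (fun k => hT.nonneg_of_mem_enl (hstep k).mem_enl) hlamlb hlam_lb hsq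
  have hv : Tendsto v atTop (𝓝 0) := tendsto_zero_of_smul_tendsto_zero hlamlb
    (fun k => (hlam_lb k).trans (le_abs_self _))
    (tendsto_zero_of_norm_sq_le (fun k => le_add_of_nonneg_right (sq_nonneg _)) hsq)
  have hywt : Tendsto (fun k => y k - wt k) atTop (𝓝 0) :=
    tendsto_zero_of_norm_sq_le (fun k => le_add_of_nonneg_left (sq_nonneg _)) hsq
  have hyx : Tendsto (fun k => y k - x k) atTop (𝓝 0) := by simpa using hywt.add hwt
  have hybdd : IsBoundedUnder (· ≤ ·) atTop (norm ∘ y) :=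
    isBoundedUnder_norm_of_sub (isBoundedUnder_norm_of_sub (f := fun _ => x 0)
      isBoundedUnder_const (hx.isBoundedUnder_norm_sub hsep _)) hyx.norm.isBoundedUnder_le
  have hcluster (U : Ultrafilter ℕ) (z : H) (hU : (U : Filter ℕ) ≤ atTop)
      (hz : TendstoWeakly x U z) : (0 : H) ∈ T z := by
    rw [← hT.enl_zero]
    exact mem_enl_of_tendstoWeakly (fun k => (hstep k).mem_enl) (hε.mono_left hU)
      (hz.of_tendsto_sub (hyx.mono_left hU)) (hybdd.mono hU) (hv.mono_left hU)
  have hxlim : Tendsto x atTop (𝓝 xstar) := tendsto_of_forall_tendstoWeakly_mem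
    (hT.convex_setOf_mem 0) hxstarS hxstar (hx.norm_sub_le hsep) hcluster
  exact ⟨hxlim, by simpa using hyx.add hxlim⟩

/-- Theorem 3.5 (strong convergence of Algorithm 1): x_k → x* and y_k → x*, the projection of x₀ onto S. -/
theorem stmt10
    (T : H → Set H) (hT : IsMaxMonotoneOp T)
    (hS : {z : H | (0 : H) ∈ T z}.Nonempty)
    (σ : ℝ) (hσ0 : 0 ≤ σ) (hσ1 : σ < 1)
    (α β lam ε : ℕ → ℝ)
    (hα : ∀ k, 0 ≤ α k) (hβ : ∀ k, 0 ≤ β k)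
    (hlam : ∀ k, 0 < lam k) (hε : ∀ k, 0 ≤ ε k)
    (x w wt y v : ℕ → H)
    (hw : ∀ k, w k = x k + α k • (x k - x (k - 1)))
    (hwt : ∀ k, wt k = w k + β k • (w k - x 0))
    (hincl : ∀ k, v k ∈ enl T (ε k) (y k))
    (herr : ∀ k, ‖lam k • v k + y k - wt k‖ ^ 2 + 2 * lam k * ε k ≤
      σ ^ 2 * (‖lam k • v k‖ ^ 2 + ‖y k - wt k‖ ^ 2))
    (hmem : ∀ k, ⟪x (k + 1) - y k, v k⟫ ≤ ε k ∧ ⟪x (k + 1) - x k, x 0 - x k⟫ ≤ 0)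
    (hproj : ∀ k, ∀ z : H, ⟪z - y k, v k⟫ ≤ ε k → ⟪z - x k, x 0 - x k⟫ ≤ 0 →
      ‖x (k + 1) - x 0‖ ≤ ‖z - x 0‖)
    (habdd : BddAbove (Set.range α)) (hbbdd : BddAbove (Set.range β))
    (hsum : Summable fun k => β k ^ 2)
    (lamlb : ℝ) (hlamlb : 0 < lamlb) (hlam_lb : ∀ k, lamlb ≤ lam k)
    (xstar : H) (hxstarS : (0 : H) ∈ T xstar)
    (hxstar : ∀ z : H, (0 : H) ∈ T z → ‖xstar - x 0‖ ≤ ‖z - x 0‖) :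
    Tendsto x atTop (𝓝 xstar) ∧ Tendsto y atTop (𝓝 xstar) := by
  have hx : IsHaugazeau (fun k => halfSpace (y k) (v k) (ε k)) x :=
    ⟨fun _ => convex_halfSpace .., hmem, fun k z hz => hproj k z hz.1 hz.2⟩
  have hwt_sub : Tendsto (fun k => wt k - x k) atTop (𝓝 0) :=
    hx.tendsto_inertial_sub (fun k => mem_halfSpace_of_mem_enl (hincl k) hxstarS) hw hwt
      (by simpa [Function.comp_def, abs_of_nonneg (hα _)] using habdd.isBoundedUnder_of_range)
      (tendsto_zero_of_norm_sq_le (by simp) hsum.tendsto_atTop_zero)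
  exact stmt10_general hT ((sq_lt_one_iff₀ hσ0).2 hσ1) (fun k => ⟨hincl k, herr k⟩) hx hwt_sub
    hlamlb hlam_lb hxstarS hxstar
end

section
/- (One iteration of the inertial Korpelevich extragradient method is a σ-approximate proximal step for F + N_C.) Let σ ∈ (0,1), λ := σ/L, w̃ ∈ H, and set: w' := P_C(w̃); y := P_C(w̃ − λ F(w')); ỹ := P_C(w̃ − λ F(y)); q := (w̃ − ỹ)/λ − F(y); v := F(y) + q; ε := ⟨q, ỹ − y⟩. Then ε ≥ 0, q ∈ N_C^ε(y) (so that v ∈ F(y) + N_C^ε(y)), and ‖λv + y − w̃‖² + 2λε ≤ σ² ‖y − w̃‖². -/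
open scoped RealInnerProductSpace

/-!
Since `ỹ` is a projection, `q` is an exact normal vector at `ỹ`; moving its base point to `y`
raises the bound by `ε = ⟪q, ỹ - y⟫`, and testing the resulting inequality at `y ∈ C` itself gives
`0 ≤ ε`.

For the error estimate put `a = w̃ - λ F(w')` and `b = w̃ - λ F(y)`. Then `λ v = w̃ - ỹ` and
`λ q = b - ỹ`, so the left-hand side is `‖y - ỹ‖² + 2⟪b - ỹ, ỹ - y⟫ = ‖b - y‖² - ‖b - ỹ‖²`.
As `y` is the projection of `a`, this is at most `‖b - a‖² = λ² ‖F(w') - F(y)‖²`, and the step size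
makes that at most `σ² ‖w' - y‖² ≤ σ² ‖y - w̃‖²`.
-/

theorem div_mul_le_mul_of_le_mul {α : Type*} [Field α] [LinearOrder α] [IsStrictOrderedRing α]
    {a b s t : α} (ha : 0 ≤ a) (hb : 0 < b) (h : s ≤ b * t) : a / b * s ≤ a * t := by
  rw [div_mul_eq_mul_div, div_le_iff₀' hb, mul_left_comm]
  gcongr

section Projection

variable {H : Type*} [NormedAddCommGroup H] [InnerProductSpace ℝ H]
  {C : Set H} {a p u x y z g : H} {ε lam : ℝ}

/-- `p` is the metric projection of `u` onto `C`, encoded by the variational inequality, which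
characterizes the nearest point when `C` is convex. -/
def IsMetricProjection (C : Set H) (u p : H) : Prop :=
  p ∈ C ∧ ∀ z ∈ C, ⟪u - p, z - p⟫ ≤ 0

/-- The `ε`-enlarged normal cone `N_C^ε(y)`; for `ε = 0` it is the normal cone of `C` at `y`.
Neither `y ∈ C` nor `0 ≤ ε` is built in. -/
def enlargedNormalCone (C : Set H) (ε : ℝ) (y : H) : Set H :=
  {u | ∀ z ∈ C, ⟪u, z - y⟫ ≤ ε}

theorem nonneg_of_mem_enlargedNormalCone (hu : u ∈ enlargedNormalCone C ε y) (hy : y ∈ C) :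
    0 ≤ ε := by
  simpa using hu y hy

theorem mem_enlargedNormalCone_add_inner (hu : u ∈ enlargedNormalCone C ε x) (y : H) :
    u ∈ enlargedNormalCone C (ε + ⟪u, x - y⟫) y := fun z hz => by
  rw [← sub_add_sub_cancel z x y, inner_add_right]
  gcongr
  exact hu z hz

theorem IsMetricProjection.inv_smul_sub_sub_mem_enlargedNormalCone
    (hp : IsMetricProjection C (x - lam • g) p) (hlam : 0 < lam) :
    lam⁻¹ • (x - p) - g ∈ enlargedNormalCone C 0 p := fun z hz => by
  have hscale : lam⁻¹ • (x - p) - g = lam⁻¹ • (x - lam • g - p) := by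
    rw [sub_right_comm, smul_sub _ (x - p), inv_smul_smul₀ hlam.ne']
  rw [hscale, real_inner_smul_left]
  exact mul_nonpos_of_nonneg_of_nonpos (inv_nonneg.2 hlam.le) (hp.2 z hz)

theorem IsMetricProjection.norm_sub_sq_le_add (hp : IsMetricProjection C a p) (hz : z ∈ C)
    (b : H) : ‖b - p‖ ^ 2 ≤ ‖b - z‖ ^ 2 + ‖b - a‖ ^ 2 := by
  have hexpand : ‖b - z‖ ^ 2 + ‖b - a‖ ^ 2 - ‖b - p‖ ^ 2 =
      ‖(b - z) - (a - p)‖ ^ 2 - 2 * ⟪a - p, z - p⟫ := by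
    have hba := norm_sub_sq_real (b - p) (a - p)
    have hbz := norm_sub_sq_real (b - z) (a - p)
    have hzp : ⟪a - p, z - p⟫ = ⟪b - p, a - p⟫ - ⟪b - z, a - p⟫ := by
      rw [← inner_sub_left, sub_sub_sub_cancel_left, real_inner_comm]
    rw [sub_sub_sub_cancel_right] at hba
    linarith
  linarith [hp.2 z hz, sq_nonneg ‖(b - z) - (a - p)‖]

theorem IsMetricProjection.norm_sub_le (hp : IsMetricProjection C u p) (hz : z ∈ C) :
    ‖z - p‖ ≤ ‖z - u‖ := by
  have hsq := hp.norm_sub_sq_le_add hz z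
  rw [sub_self, norm_zero, zero_pow two_ne_zero, zero_add] at hsq
  exact le_of_sq_le_sq hsq (norm_nonneg _)

theorem IsMetricProjection.norm_sub_sq_add_two_mul_inner_le
    (hp : IsMetricProjection C (x - lam • g) p) (hlam : lam ≠ 0) (hz : z ∈ C) (g' : H) :
    ‖p - z‖ ^ 2 + 2 * lam * ⟪lam⁻¹ • (x - z) - g', z - p⟫ ≤ (lam * ‖g - g'‖) ^ 2 := by
  set b := x - lam • g' with hb
  have hresidual : lam * ⟪lam⁻¹ • (x - z) - g', z - p⟫ = ⟪b - z, z - p⟫ := by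
    rw [← real_inner_smul_left, smul_sub, smul_inv_smul₀ hlam, hb, sub_right_comm]
  have hsplit : ‖b - p‖ ^ 2 = ‖b - z‖ ^ 2 + 2 * ⟪b - z, z - p⟫ + ‖p - z‖ ^ 2 := by
    rw [← sub_add_sub_cancel b z p, norm_add_sq_real, norm_sub_rev p z]
  have hstep : ‖b - (x - lam • g)‖ ^ 2 = (lam * ‖g - g'‖) ^ 2 := by
    rw [hb, sub_sub_sub_cancel_left, ← smul_sub, norm_smul, mul_pow, mul_pow, Real.norm_eq_abs,
      sq_abs]
  linarith [hp.norm_sub_sq_le_add hz b]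

end Projection

theorem stmt12_general {H : Type*} [NormedAddCommGroup H] [InnerProductSpace ℝ H]
    {C : Set H} {F : H → H} {σ lam ε : ℝ} {wt w' y yt q v : H} (hlam : 0 < lam)
    (hF : lam * ‖F w' - F y‖ ≤ σ * ‖w' - y‖)
    (hw' : IsMetricProjection C wt w')
    (hy : IsMetricProjection C (wt - lam • F w') y)
    (hyt : IsMetricProjection C (wt - lam • F y) yt)
    (hq : q = lam⁻¹ • (wt - yt) - F y) (hv : v = F y + q) (hε : ε = ⟪q, yt - y⟫) :
    0 ≤ ε ∧ q ∈ enlargedNormalCone C ε y ∧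
      ‖lam • v + y - wt‖ ^ 2 + 2 * lam * ε ≤ σ ^ 2 * ‖y - wt‖ ^ 2 := by
  have hcone : q ∈ enlargedNormalCone C ε y := by
    have hnormal := hyt.inv_smul_sub_sub_mem_enlargedNormalCone hlam
    simpa only [← hq, zero_add, ← hε] using mem_enlargedNormalCone_add_inner hnormal y
  have hresidual : lam • v + y - wt = y - yt := by
    rw [hv, hq, add_sub_cancel, smul_inv_smul₀ hlam.ne']
    abel
  refine ⟨nonneg_of_mem_enlargedNormalCone hcone hy.1, hcone, ?_⟩
  calc ‖lam • v + y - wt‖ ^ 2 + 2 * lam * ε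
      ≤ (lam * ‖F w' - F y‖) ^ 2 := by
        rw [hresidual, hε, hq]
        exact hy.norm_sub_sq_add_two_mul_inner_le hlam.ne' hyt.1 (F y)
    _ ≤ (σ * ‖w' - y‖) ^ 2 := by gcongr
    _ = σ ^ 2 * ‖y - w'‖ ^ 2 := by rw [mul_pow, norm_sub_rev]
    _ ≤ σ ^ 2 * ‖y - wt‖ ^ 2 := by
        gcongr
        exact hw'.norm_sub_le hy.1

/-- Proposition 4.1 (one iteration): one step of the inertial Korpelevich extragradient
method gives a σ-approximate proximal step for F + N_C. -/
theorem stmt12 {H : Type*} [NormedAddCommGroup H] [InnerProductSpace ℝ H]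
    (C : Set H) (hCne : C.Nonempty) (hCcl : IsClosed C) (hCconv : Convex ℝ C)
    (F : H → H) (L : ℝ) (hL : 0 < L)
    (hmono : ∀ x ∈ C, ∀ y ∈ C, 0 ≤ ⟪F x - F y, x - y⟫)
    (hlip : ∀ x ∈ C, ∀ y ∈ C, ‖F x - F y‖ ≤ L * ‖x - y‖)
    (PC : H → H)
    (hPC : ∀ u : H, PC u ∈ C ∧ ∀ z ∈ C, ⟪u - PC u, z - PC u⟫ ≤ 0)
    (σ lam : ℝ) (hσ0 : 0 < σ) (hσ1 : σ < 1) (hlam : lam = σ / L)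
    (wt w' y yt q v : H) (ε : ℝ)
    (hw' : w' = PC wt)
    (hy : y = PC (wt - lam • F w'))
    (hyt : yt = PC (wt - lam • F y))
    (hq : q = (1 / lam) • (wt - yt) - F y)
    (hv : v = F y + q)
    (hε : ε = ⟪q, yt - y⟫) :
    0 ≤ ε ∧ (∀ z ∈ C, ⟪q, z - y⟫ ≤ ε) ∧
      ‖lam • v + y - wt‖ ^ 2 + 2 * lam * ε ≤ σ ^ 2 * ‖y - wt‖ ^ 2 := by
  have hstep : lam * ‖F w' - F y‖ ≤ σ * ‖w' - y‖ :=
    hlam ▸ div_mul_le_mul_of_le_mul hσ0.le hL (hlip w' (hw' ▸ (hPC _).1) y (hy ▸ (hPC _).1))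
  exact stmt12_general (hlam ▸ div_pos hσ0 hL) hstep (hw' ▸ hPC _) (hy ▸ hPC _) (hyt ▸ hPC _)
    (one_div lam ▸ hq) hv hε
end

section
/- (One iteration of the inertial Tseng forward-backward method is a σ-approximate proximal step for F + B.) Let σ ∈ (0,1), λ := σ/L and w̃ ∈ H. Set w' := P_C(w̃), let y ∈ H satisfy (w̃ − λ F(w') − y)/λ ∈ B(y) (i.e. y is the resolvent (λB + I)⁻¹(w̃ − λ F(w'))), and set v := F(y) − F(w') + (w̃ − y)/λ. Then v ∈ F(y) + B(y) and ‖λv + y − w̃‖ ≤ σ ‖y − w̃‖. -/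
/-!
In `lam • v + y - wt` the increments `wt - y` cancel, leaving `lam • (F y - F w')`. Both `y` and `w'`
lie in `C`, so the Lipschitz bound controls this by `lam * L * ‖y - w'‖`, where `lam * L = σ`.
Finally, projecting `wt` onto `C` does not increase its distance to the point `y` of `C`, whence
`‖y - w'‖ ≤ ‖y - wt‖`.
-/

open scoped RealInnerProductSpace
open Filter Topology

variable {H : Type*} [NormedAddCommGroup H] [InnerProductSpace ℝ H] [CompleteSpace H]

section Algebra

variable {K M : Type*} [DivisionRing K] [AddCommGroup M] [Module K M] {c : K}

lemma add_one_div_smul_sub_sub (hc : c ≠ 0) (a b w y : M) :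
    a - b + (1 / c) • (w - y) - a = (1 / c) • (w - c • b - y) := by
  have hcb : (1 / c) • c • b = b := by rw [one_div, inv_smul_smul₀ hc]
  rw [sub_right_comm w, smul_sub _ (w - y), hcb]
  abel

lemma smul_add_one_div_smul_sub_add_sub (hc : c ≠ 0) (a w y : M) :
    c • (a + (1 / c) • (w - y)) + y - w = c • a := by
  rw [smul_add, one_div, smul_inv_smul₀ hc]
  abel

end Algebra

section InnerProductSpace

variable {E : Type*} [NormedAddCommGroup E] [InnerProductSpace ℝ E]

lemma norm_sub_le_norm_sub_of_inner_nonpos {x p z : E} (h : ⟪x - p, z - p⟫ ≤ 0) :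
    ‖z - p‖ ≤ ‖z - x‖ := by
  have hsq : ‖z - p‖ * ‖z - p‖ ≤ ‖z - x‖ * ‖z - p‖ := calc
    ‖z - p‖ * ‖z - p‖ = ⟪z - x, z - p⟫ + ⟪x - p, z - p⟫ := by
      rw [← inner_add_left, sub_add_sub_cancel, real_inner_self_eq_norm_mul_norm]
    _ ≤ ⟪z - x, z - p⟫ := add_le_of_nonpos_right h
    _ ≤ ‖z - x‖ * ‖z - p‖ := real_inner_le_norm _ _
  rcases (norm_nonneg (z - p)).eq_or_lt with hzero | hpos
  · exact hzero ▸ norm_nonneg _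
  · exact le_of_mul_le_mul_right hsq hpos

theorem stmt15_general {C : Set E} {F : E → E} {L : ℝ} (hL : 0 ≤ L)
    (hlip : ∀ x ∈ C, ∀ y ∈ C, ‖F x - F y‖ ≤ L * ‖x - y‖)
    {B : E → Set E} (hdomB : ∀ z, (B z).Nonempty → z ∈ C)
    {σ lam : ℝ} (hlam : 0 < lam) (hlamL : lam * L ≤ σ)
    {wt w' y v : E} (hw' : w' ∈ C) (hproj : ∀ z ∈ C, ⟪wt - w', z - w'⟫ ≤ 0)
    (hy : (1 / lam) • (wt - lam • F w' - y) ∈ B y)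
    (hv : v = F y - F w' + (1 / lam) • (wt - y)) :
    v - F y ∈ B y ∧ ‖lam • v + y - wt‖ ≤ σ * ‖y - wt‖ := by
  subst hv
  rw [add_one_div_smul_sub_sub hlam.ne', smul_add_one_div_smul_sub_add_sub hlam.ne']
  refine ⟨hy, ?_⟩
  have hyC : y ∈ C := hdomB y ⟨_, hy⟩
  have hdist : ‖y - w'‖ ≤ ‖y - wt‖ := norm_sub_le_norm_sub_of_inner_nonpos (hproj y hyC)
  calc
    ‖lam • (F y - F w')‖ = lam * ‖F y - F w'‖ := norm_smul_of_nonneg hlam.le _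
    _ ≤ lam * (L * ‖y - w'‖) := by gcongr; exact hlip y hyC w' hw'
    _ ≤ lam * (L * ‖y - wt‖) := by gcongr
    _ = lam * L * ‖y - wt‖ := (mul_assoc _ _ _).symm
    _ ≤ σ * ‖y - wt‖ := by gcongr

end InnerProductSpace

/-- Proposition 5.1: one iteration of the inertial Tseng forward-backward method is a
σ-approximate proximal step for F + B. -/
theorem stmt15
    (C : Set H) (hCne : C.Nonempty) (hCcl : IsClosed C) (hCconv : Convex ℝ C)
    (D : Set H) (hCD : C ⊆ D)
    (F : H → H) (L : ℝ) (hL : 0 < L)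
    (hmono : ∀ x ∈ D, ∀ y ∈ D, 0 ≤ ⟪F x - F y, x - y⟫)
    (hlip : ∀ x ∈ D, ∀ y ∈ D, ‖F x - F y‖ ≤ L * ‖x - y‖)
    (B : H → Set H) (hB : IsMaxMonotoneOp B)
    (hdomB : ∀ z : H, (B z).Nonempty → z ∈ C)
    (PC : H → H)
    (hPC : ∀ u : H, PC u ∈ C ∧ ∀ z ∈ C, ⟪u - PC u, z - PC u⟫ ≤ 0)
    (σ lam : ℝ) (hσ0 : 0 < σ) (hσ1 : σ < 1) (hlam : lam = σ / L)
    (wt w' y v : H)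
    (hw' : w' = PC wt)
    (hy : (1 / lam) • (wt - lam • F w' - y) ∈ B y)
    (hv : v = F y - F w' + (1 / lam) • (wt - y)) :
    v - F y ∈ B y ∧ ‖lam • v + y - wt‖ ≤ σ * ‖y - wt‖ := by
  subst hlam hw'
  exact stmt15_general hL.le (fun x hx z hz ↦ hlip x (hCD hx) z (hCD hz)) hdomB (div_pos hσ0 hL)
    (div_mul_cancel₀ σ hL.ne').le (hPC wt).1 (hPC wt).2 hy hv
end
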